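/- Set x' := (1/2)(x ⊗ x + x ⊗ x³ + x³ ⊗ x − x³ ⊗ x³) and y' := y ⊗ y in the twisted tensor product algebra A ⊗̂ A. Then x'⁴ = 1 ⊗ 1, y'² = (1/2)((1 ⊗ 1) + ζx' + x'² − ζx'³), and x'y' = y'x'. Consequently there is a unique K-algebra homomorphism Δ : A → A ⊗̂ A with Δ(x) = x' and Δ(y) = y'. -/

import Mathlib

open MvPolynomial TensorProduct

/-- The defining ideal of the first example: generated by `x⁴ - 1` and
`y² - (1/2)(1 + ζx + x² - ζx³)`. -/
noncomputable def firstRelIdeal (K : Type*) [Field K] (ζ : K) :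
    Ideal (MvPolynomial (Fin 2) K) :=
  Ideal.span {X 0 ^ 4 - 1,
    X 1 ^ 2 - C ((2 : K)⁻¹) * (1 + C ζ * X 0 + X 0 ^ 2 - C ζ * X 0 ^ 3)}

/-- The first example: the commutative `K`-algebra generated by commuting elements `x`, `y`
subject to `x⁴ = 1` and `y² = (1/2)(1 + ζx + x² - ζx³)`. -/
abbrev FirstAlg (K : Type*) [Field K] (ζ : K) : Type _ :=
  MvPolynomial (Fin 2) K ⧸ firstRelIdeal K ζ

/-- The generator `x` of the first example. -/
noncomputable def xF (K : Type*) [Field K] (ζ : K) : FirstAlg K ζ :=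
  Ideal.Quotient.mk (firstRelIdeal K ζ) (X 0)

/-- The generator `y` of the first example. -/
noncomputable def yF (K : Type*) [Field K] (ζ : K) : FirstAlg K ζ :=
  Ideal.Quotient.mk (firstRelIdeal K ζ) (X 1)

/-- The group `G = ℤ/2 × ℤ/2`, written multiplicatively. -/
abbrev GG : Type := Multiplicative (ZMod 2 × ZMod 2)

/-- `g₁ = (0,0)`. -/
def g1 : GG := Multiplicative.ofAdd (0, 0)
/-- `g₂ = (1,0)`. -/
def g2 : GG := Multiplicative.ofAdd (1, 0)
/-- `g₃ = (0,1)`. -/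
def g3 : GG := Multiplicative.ofAdd (0, 1)
/-- `g₄ = (1,1)`. -/
def g4 : GG := Multiplicative.ofAdd (1, 1)

/-- The twisted multiplication of `A ⊗̂ A`:
`(a ⊗ b)(a' ⊗ b') = (1/4) ∑_{g,g'} θ(g,g') (a (g.a')) ⊗ ((g'.b) b')`,
extended bilinearly. -/
noncomputable def twMul {K : Type*} [Field K] {B : Type*} [Ring B] [Algebra K B]
    {G : Type*} [Monoid G] [Fintype G]
    (ρ : G →* (B →ₐ[K] B)) (θ : G → G → K)
    (z w : B ⊗[K] B) : B ⊗[K] B :=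
  (4 : K)⁻¹ • ∑ g : G, ∑ g' : G, θ g g' •
    (TensorProduct.map (LinearMap.mul' K B) (LinearMap.mul' K B))
      ((TensorProduct.tensorTensorTensorComm K B B B B)
        ((TensorProduct.map
            (TensorProduct.map LinearMap.id (ρ g').toLinearMap)
            (TensorProduct.map (ρ g).toLinearMap LinearMap.id))
          (z ⊗ₜ[K] w)))

/-!
The twisted product on `B ⊗ B` is associative because `θ` is a bicharacter, and unital because `θ`
is nondegenerate, so `B ⊗̂ B` is an algebra and `Δ` comes from the universal property of `A` once
`x'` and `y'` satisfy the relations of `A`.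

With `s = x² ⊗ 1` and `t = 1 ⊗ x²`, both of square `1`, the element `β = (1 + s + t - st) / 2` is
an involution and `x' = (x ⊗ x) β`. The automorphism `φ'` fixes `x'` in both tensor factors, and
`g₃` generates a subgroup on which `θ` is trivial and which is its own orthogonal. Hence `x'` has
the same powers in the twisted product as in `B ⊗ B`, in particular `x'² = x² ⊗ x²`, and multiplying
`x'` by `y'` on either side amounts to multiplying `x' y'` by `β` in `B ⊗ B`, which gives `xy ⊗ xy`.

Finally `y' y'` is computed on the common eigenspaces of `s` and `t`. The relation for `y²` says
that `y²` is `1` where `x² = 1` and `ζ x` where `x² = -1`; the relation to prove for `y'` has the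
same form with `x'² = st`, and `x' = x ⊗ x` wherever `st = -1`.
-/

theorem ne_zero_of_map_mul {M N : Type*} [Group M] [MulZeroClass N] {f : M → N}
    (hf : ∀ g h, f (g * h) = f g * f h) {a : M} (ha : f a ≠ 0) (g : M) : f g ≠ 0 := by
  rw [← mul_inv_cancel_left g a, hf] at ha
  exact left_ne_zero_of_mul ha

theorem map_one_of_map_mul {M N : Type*} [MulOneClass M] [MonoidWithZero N]
    [IsLeftCancelMulZero N] {f : M → N} (hf : ∀ g h, f (g * h) = f g * f h) {a : M}
    (ha : f a ≠ 0) : f 1 = 1 :=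
  (mul_eq_left₀ ha).mp (by rw [← hf, mul_one])

theorem exists_bicharacter_eq {K G : Type*} [Field K] [Group G] {θ : G → G → K}
    (hr : ∀ g h h', θ g (h * h') = θ g h * θ g h') (hl : ∀ g g' h, θ (g * g') h = θ g h * θ g' h)
    {a b : G} (hab : θ a b ≠ 0) : ∃ χ : G →* G →* K, θ = (χ · ·) := by
  have hne (g h : G) : θ g h ≠ 0 :=
    ne_zero_of_map_mul (hr g) (ne_zero_of_map_mul (f := (θ · b)) (hl · · b) hab g) h
  let χ : G →* G →* K :=
    { toFun g := { toFun := θ g, map_one' := map_one_of_map_mul (hr g) (hne g 1), map_mul' := hr g }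
      map_one' := MonoidHom.ext fun h =>
        map_one_of_map_mul (f := (θ · h)) (hl · · h) (hne 1 h)
      map_mul' g g' := MonoidHom.ext (hl g g') }
  exact ⟨χ, rfl⟩

theorem bicharacter_coboundary {K G : Type*} [CommMonoid K] [Group G] (χ : G →* G →* K)
    (a b c d : G) : χ c (b * a) * χ (c⁻¹ * d) b = χ d b * χ c a := by
  have hcancel : χ c b * χ c⁻¹ b = 1 := by
    rw [← MonoidHom.mul_apply, ← map_mul, mul_inv_cancel, map_one, MonoidHom.one_apply]
  calc χ c (b * a) * χ (c⁻¹ * d) b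
      = χ c b * χ c⁻¹ b * (χ d b * χ c a) := by
        rw [map_mul, map_mul, MonoidHom.mul_apply]; ac_rfl
    _ = χ d b * χ c a := by rw [hcancel, one_mul]

section TwistedProduct

variable {K : Type*} [Field K] {B : Type*} [Ring B] [Algebra K B]

section Actions

variable {G : Type*} [Monoid G] (ρ : G →* (B →ₐ[K] B))

/-- The action of `G` on `B ⊗ B` through the left tensor factor. -/
noncomputable def leftAct : G →* (B ⊗[K] B →ₐ[K] B ⊗[K] B) where
  toFun g := Algebra.TensorProduct.map (ρ g) (AlgHom.id K B)
  map_one' := by ext <;> simp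
  map_mul' g h := by ext <;> simp

/-- The action of `G` on `B ⊗ B` through the right tensor factor. -/
noncomputable def rightAct : G →* (B ⊗[K] B →ₐ[K] B ⊗[K] B) where
  toFun g := Algebra.TensorProduct.map (AlgHom.id K B) (ρ g)
  map_one' := by ext <;> simp
  map_mul' g h := by ext <;> simp

@[simp]
theorem leftAct_tmul (g : G) (a b : B) : leftAct ρ g (a ⊗ₜ[K] b) = ρ g a ⊗ₜ[K] b := rfl

@[simp]
theorem rightAct_tmul (g : G) (a b : B) : rightAct ρ g (a ⊗ₜ[K] b) = a ⊗ₜ[K] ρ g b := rfl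

theorem leftAct_rightAct (g h : G) (z : B ⊗[K] B) :
    leftAct ρ g (rightAct ρ h z) = rightAct ρ h (leftAct ρ g z) := by
  have hcomm : (leftAct ρ g).comp (rightAct ρ h) = (rightAct ρ h).comp (leftAct ρ g) := by
    ext <;> simp
  exact DFunLike.congr_fun hcomm z

/-- The twisted multiplication `twMul ρ θ` as a bilinear map, written through the ordinary
multiplication of `B ⊗ B`. -/
noncomputable def twMulBilin [Fintype G] (θ : G → G → K) :
    B ⊗[K] B →ₗ[K] B ⊗[K] B →ₗ[K] B ⊗[K] B :=
  (4 : K)⁻¹ • ∑ g : G, ∑ g' : G, θ g g' •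
    (LinearMap.mul K (B ⊗[K] B)).compl₁₂ (rightAct ρ g').toLinearMap (leftAct ρ g).toLinearMap

theorem twMulBilin_apply [Fintype G] (θ : G → G → K) (z w : B ⊗[K] B) :
    twMulBilin ρ θ z w = twMul ρ θ z w := by
  simp only [twMulBilin, twMul, LinearMap.smul_apply, LinearMap.sum_apply]
  congr! with g _ g' _
  induction z with
  | zero => simp
  | add z₁ z₂ h₁ h₂ => simp only [add_tmul, map_add, LinearMap.add_apply, h₁, h₂]
  | tmul a b =>
    induction w with
    | zero => simp
    | add w₁ w₂ h₁ h₂ => simp only [tmul_add, map_add, h₁, h₂]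
    | tmul c d => simp

theorem twMul_eq_sum [Fintype G] (θ : G → G → K) (z w : B ⊗[K] B) :
    twMul ρ θ z w =
      (4 : K)⁻¹ • ∑ g : G, ∑ g' : G, θ g g' • (rightAct ρ g' z * leftAct ρ g w) := by
  simp [← twMulBilin_apply, twMulBilin]

end Actions

variable {G : Type*} [Group G] [Fintype G] (ρ : G →* (B →ₐ[K] B)) (χ : G →* G →* K)

theorem twMul_assoc (z w v : B ⊗[K] B) :
    twMul ρ (χ · ·) (twMul ρ (χ · ·) z w) v =
      twMul ρ (χ · ·) z (twMul ρ (χ · ·) w v) := by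
  let reindex : G × G × G × G ≃ G × G × G × G :=
    { toFun | (d, b, c, a) => (c, b * a, c⁻¹ * d, b)
      invFun | (c, a, d, b) => (c * d, b, c, b⁻¹ * a)
      left_inv := by rintro ⟨d, b, c, a⟩; simp
      right_inv := by rintro ⟨c, a, d, b⟩; simp }
  simp only [twMul_eq_sum, map_smul, map_sum, map_mul, smul_mul_assoc, mul_smul_comm,
    Finset.sum_mul, Finset.mul_sum, Finset.smul_sum, smul_smul, ← Fintype.sum_prod_type']
  refine Fintype.sum_equiv reindex _ _ ?_
  rintro ⟨d, b, c, a⟩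
  have hz : rightAct ρ (b * a) z = rightAct ρ b (rightAct ρ a z) := by
    rw [map_mul, AlgHom.mul_apply]
  have hv : leftAct ρ d v = leftAct ρ c (leftAct ρ (c⁻¹ * d) v) := by
    rw [← AlgHom.mul_apply, ← map_mul, mul_inv_cancel_left]
  simp only [reindex, Equiv.coe_fn_mk]
  rw [hz, hv, leftAct_rightAct, mul_assoc]
  congr 1
  linear_combination -(4 : K)⁻¹ * 4⁻¹ * bicharacter_coboundary χ a b c d

theorem sum_bicharacter [DecidableEq G] {χ : G →* G →* K} (hχ : Function.Injective χ) (g : G) :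
    ∑ h : G, χ g h = if g = 1 then (Fintype.card G : K) else 0 := by
  classical
  rw [sum_hom_units]
  simp [map_eq_one_iff χ hχ]

variable {χ}

theorem one_twMul (hχ : Function.Injective χ) (hcard : (Fintype.card G : K) = 4)
    (h4 : (4 : K) ≠ 0) (w : B ⊗[K] B) : twMul ρ (χ · ·) 1 w = w := by
  classical
  simp only [twMul_eq_sum, map_one, one_mul, ← Finset.sum_smul, sum_bicharacter hχ, ite_smul,
    zero_smul, Finset.sum_ite_eq', Finset.mem_univ, if_true, hcard, AlgHom.one_apply]
  exact inv_smul_smul₀ h4 w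

theorem twMul_one (hχ : Function.Injective χ.flip) (hcard : (Fintype.card G : K) = 4)
    (h4 : (4 : K) ≠ 0) (z : B ⊗[K] B) : twMul ρ (χ · ·) z 1 = z := by
  classical
  rw [twMul_eq_sum, Finset.sum_comm]
  simp only [map_one, mul_one, ← Finset.sum_smul, ← MonoidHom.flip_apply χ, sum_bicharacter hχ,
    ite_smul, zero_smul, Finset.sum_ite_eq', Finset.mem_univ, if_true, hcard, AlgHom.one_apply]
  exact inv_smul_smul₀ h4 z

variable (χ)

/-- The conditions on a bicharacter under which `1 ⊗ 1` is a unit for `twMul`: it is nondegenerate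
on both sides, and the normalizing factor `4` is the order of the group and is invertible. -/
class IsUnitalTwist : Prop where
  injective : Function.Injective χ
  injective_flip : Function.Injective χ.flip
  card_eq : (Fintype.card G : K) = 4
  four_ne_zero : (4 : K) ≠ 0

/-- The twisted tensor product algebra `B ⊗̂ B`: a copy of the module `B ⊗ B`, carrying the
multiplication `twMul`. -/
def TwistedTensor (_ρ : G →* (B →ₐ[K] B)) (_χ : G →* G →* K) : Type _ := B ⊗[K] B

namespace TwistedTensor

noncomputable instance : AddCommGroup (TwistedTensor ρ χ) :=
  inferInstanceAs (AddCommGroup (B ⊗[K] B))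

noncomputable instance : Module K (TwistedTensor ρ χ) :=
  inferInstanceAs (Module K (B ⊗[K] B))

/-- The identification of the modules `B ⊗ B` and `B ⊗̂ B`. -/
noncomputable def of : B ⊗[K] B ≃ₗ[K] TwistedTensor ρ χ :=
  LinearEquiv.refl K (B ⊗[K] B)

variable [IsUnitalTwist χ]

noncomputable instance : Ring (TwistedTensor ρ χ) where
  __ := (inferInstance : AddCommGroup (TwistedTensor ρ χ))
  mul z w := of ρ χ (twMulBilin ρ (χ · ·) ((of ρ χ).symm z) ((of ρ χ).symm w))
  one := of ρ χ 1
  left_distrib z := map_add (twMulBilin ρ (χ · ·) z)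
  right_distrib z w v := LinearMap.map_add₂ (twMulBilin ρ (χ · ·)) z w v
  zero_mul w := LinearMap.map_zero₂ (twMulBilin ρ (χ · ·)) w
  mul_zero z := map_zero (twMulBilin ρ (χ · ·) z)
  mul_assoc := by
    have hassoc (z w v : B ⊗[K] B) :
        twMulBilin ρ (χ · ·) (twMulBilin ρ (χ · ·) z w) v =
          twMulBilin ρ (χ · ·) z (twMulBilin ρ (χ · ·) w v) := by
      simp only [twMulBilin_apply, twMul_assoc]
    exact hassoc
  one_mul w := (twMulBilin_apply ρ _ 1 w).trans <|
    one_twMul ρ IsUnitalTwist.injective (IsUnitalTwist.card_eq χ) (IsUnitalTwist.four_ne_zero χ) w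
  mul_one z := (twMulBilin_apply ρ _ z 1).trans <|
    twMul_one ρ IsUnitalTwist.injective_flip (IsUnitalTwist.card_eq χ)
      (IsUnitalTwist.four_ne_zero χ) z

theorem of_one : of ρ χ 1 = 1 := rfl

theorem of_mul_of (z w : B ⊗[K] B) : of ρ χ z * of ρ χ w = of ρ χ (twMul ρ (χ · ·) z w) :=
  congrArg (of ρ χ) (twMulBilin_apply ρ (χ · ·) z w)

noncomputable instance : Algebra K (TwistedTensor ρ χ) :=
  .ofModule (fun r z w => LinearMap.map_smul₂ (twMulBilin ρ (χ · ·)) r z w)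
    (fun r z w => map_smul (twMulBilin ρ (χ · ·) z) r w)

end TwistedTensor

end TwistedProduct

section FirstPair

variable {K : Type*} [Field K] {ζ : K}

/-- Two elements of a `K`-algebra satisfying the defining relations of `FirstAlg K ζ`. -/
structure IsFirstPair (ζ : K) {S : Type*} [Ring S] [Algebra K S] (u v : S) : Prop where
  commute : Commute u v
  pow_four : u ^ 4 = 1
  sq : v ^ 2 = (2 : K)⁻¹ • (1 + ζ • u + u ^ 2 - ζ • u ^ 3)

theorem isFirstPair_xF_yF : IsFirstPair ζ (xF K ζ) (yF K ζ) where
  commute := Commute.all _ _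
  pow_four := by
    rw [xF, ← map_pow, ← map_one (Ideal.Quotient.mk _), Ideal.Quotient.eq]
    exact Ideal.subset_span (by simp)
  sq := by
    have hrel : Ideal.Quotient.mkₐ K (firstRelIdeal K ζ) (X 1 ^ 2) =
        Ideal.Quotient.mkₐ K (firstRelIdeal K ζ)
          (C ((2 : K)⁻¹) * (1 + C ζ * X 0 + X 0 ^ 2 - C ζ * X 0 ^ 3)) := by
      rw [Ideal.Quotient.mkₐ_eq_mk, Ideal.Quotient.eq]
      exact Ideal.subset_span (by simp)
    simp only [C_mul', map_smul, map_add, map_sub, map_pow, map_one] at hrel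
    exact hrel

namespace IsFirstPair

theorem exists_algHom_of_comm {S : Type*} [CommRing S] [Algebra K S] {u v : S}
    (h : IsFirstPair ζ u v) : ∃ f : FirstAlg K ζ →ₐ[K] S, f (xF K ζ) = u ∧ f (yF K ζ) = v := by
  have hker : firstRelIdeal K ζ ≤ RingHom.ker (aeval (R := K) ![u, v]) := by
    refine Ideal.span_le.mpr ?_
    rintro q (rfl | rfl)
    · simp [RingHom.mem_ker, h.pow_four]
    · simp [RingHom.mem_ker, h.sq, Algebra.smul_def]
  exact ⟨Ideal.Quotient.liftₐ _ (aeval ![u, v]) hker, aeval_X _ _, aeval_X _ _⟩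

open scoped IsMulCommutative in
theorem exists_algHom {S : Type*} [Ring S] [Algebra K S] {u v : S} (h : IsFirstPair ζ u v) :
    ∃ f : FirstAlg K ζ →ₐ[K] S, f (xF K ζ) = u ∧ f (yF K ζ) = v := by
  have hcomm : ∀ a ∈ ({u, v} : Set S), ∀ b ∈ ({u, v} : Set S), a * b = b * a := by
    rintro a (rfl | rfl) b (rfl | rfl)
    exacts [rfl, h.commute, h.commute.symm, rfl]
  have := Algebra.isMulCommutative_adjoin K hcomm
  let u' : Algebra.adjoin K {u, v} := ⟨u, Algebra.subset_adjoin (by simp)⟩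
  let v' : Algebra.adjoin K {u, v} := ⟨v, Algebra.subset_adjoin (by simp)⟩
  have h' : IsFirstPair ζ u' v' := ⟨.all _ _, Subtype.ext h.pow_four, Subtype.ext h.sq⟩
  obtain ⟨f, hfu, hfv⟩ := h'.exists_algHom_of_comm
  exact ⟨(Algebra.adjoin K {u, v}).val.comp f, congrArg Subtype.val hfu, congrArg Subtype.val hfv⟩

theorem existsUnique_algHom {S : Type*} [Ring S] [Algebra K S] {u v : S} (h : IsFirstPair ζ u v) :
    ∃! f : FirstAlg K ζ →ₐ[K] S, f (xF K ζ) = u ∧ f (yF K ζ) = v := by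
  obtain ⟨f, hfu, hfv⟩ := h.exists_algHom
  refine ⟨f, ⟨hfu, hfv⟩, fun f' ⟨hfu', hfv'⟩ => ?_⟩
  refine Ideal.Quotient.algHom_ext _ (MvPolynomial.algHom_ext fun i => ?_)
  fin_cases i
  · exact hfu'.trans hfu.symm
  · exact hfv'.trans hfv.symm

end IsFirstPair

end FirstPair

theorem sum_GG {M : Type*} [AddCommMonoid M] (f : GG → M) :
    ∑ g : GG, f g = f 1 + f g2 + f g3 + f (g2 * g3) := by
  have huniv : (Finset.univ : Finset GG) = {1, g2, g3, g2 * g3} := by decide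
  rw [huniv, Finset.sum_insert (by decide), Finset.sum_insert (by decide),
    Finset.sum_insert (by decide), Finset.sum_singleton]
  simp only [add_assoc]

theorem inv_four_mul_two {K : Type*} [Field K] (h2 : (2 : K) ≠ 0) : (4 : K)⁻¹ * 2 = 2⁻¹ := by
  rw [show (4 : K) = 2 * 2 by norm_num, mul_inv, inv_mul_cancel_right₀ h2]

section Metabolic

/-- The bicharacter `χ` of `GG` has `⟨g3⟩` as a Lagrangian, that is, self-orthogonal, subgroup.
The value `χ g2 g2` is left free. -/
structure IsMetabolic {K : Type*} [CommRing K] (χ : GG →* GG →* K) : Prop where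
  g2_g3 : χ g2 g3 = -1
  g3_g2 : χ g3 g2 = -1
  g3_g3 : χ g3 g3 = 1

namespace IsMetabolic

variable {K : Type*} [Field K] {χ : GG →* GG →* K}

theorem flip (hχ : IsMetabolic χ) : IsMetabolic χ.flip :=
  ⟨hχ.g3_g2, hχ.g2_g3, hχ.g3_g3⟩

theorem injective (hχ : IsMetabolic χ) (h2 : (2 : K) ≠ 0) : Function.Injective χ := by
  have hneg : (-1 : K) ≠ 1 := fun h => h2 (by linear_combination -h)
  have hcases : ∀ g : GG, g = 1 ∨ g = g2 ∨ g = g3 ∨ g = g2 * g3 := by decide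
  refine (injective_iff_map_eq_one χ).mpr fun g hg => ?_
  rcases hcases g with rfl | rfl | rfl | rfl
  · rfl
  · exact absurd (by rw [← hχ.g2_g3, hg, MonoidHom.one_apply]) hneg
  · exact absurd (by rw [← hχ.g3_g2, hg, MonoidHom.one_apply]) hneg
  · have hval : χ (g2 * g3) g3 = -1 := by
      rw [map_mul, MonoidHom.mul_apply, hχ.g2_g3, hχ.g3_g3, mul_one]
    exact absurd (by rw [← hval, hg, MonoidHom.one_apply]) hneg

theorem isUnitalTwist (hχ : IsMetabolic χ) (h2 : (2 : K) ≠ 0) : IsUnitalTwist χ where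
  injective := hχ.injective h2
  injective_flip := hχ.flip.injective h2
  card_eq := by simp
  four_ne_zero := by simpa [show (4 : K) = 2 * 2 by norm_num] using h2

variable {B : Type*} [Ring B] [Algebra K B] (ρ : GG →* (B →ₐ[K] B)) {z w : B ⊗[K] B}

theorem twMul_of_rightAct_eq (hχ : IsMetabolic χ) (h2 : (2 : K) ≠ 0) (hz : rightAct ρ g3 z = z)
    (w : B ⊗[K] B) : twMul ρ (χ · ·) z w = (2 : K)⁻¹ •
      (z * (w + leftAct ρ g3 w) + rightAct ρ g2 z * (w - leftAct ρ g3 w)) := by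
  rw [twMul_eq_sum, ← inv_four_mul_two h2, mul_smul]
  congr 1
  simp only [sum_GG, map_mul, map_one, MonoidHom.mul_apply, MonoidHom.one_apply,
    AlgHom.mul_apply, AlgHom.one_apply, hz, hχ.g2_g3, hχ.g3_g2, hχ.g3_g3, mul_add, mul_sub]
  module

theorem twMul_of_leftAct_eq (hχ : IsMetabolic χ) (h2 : (2 : K) ≠ 0) (z : B ⊗[K] B)
    (hw : leftAct ρ g3 w = w) : twMul ρ (χ · ·) z w = (2 : K)⁻¹ •
      ((z + rightAct ρ g3 z) * w + (z - rightAct ρ g3 z) * leftAct ρ g2 w) := by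
  rw [twMul_eq_sum, ← inv_four_mul_two h2, mul_smul]
  congr 1
  simp only [sum_GG, map_mul, map_one, MonoidHom.mul_apply, MonoidHom.one_apply,
    AlgHom.mul_apply, AlgHom.one_apply, hw, hχ.g2_g3, hχ.g3_g2, hχ.g3_g3, add_mul, sub_mul]
  rw [← AlgHom.mul_apply, ← map_mul, show g2 * g3 = g3 * g2 from rfl]
  module

theorem twMul_eq_mul (hχ : IsMetabolic χ) (h2 : (2 : K) ≠ 0) (hz : rightAct ρ g3 z = z)
    (hw : leftAct ρ g3 w = w) : twMul ρ (χ · ·) z w = z * w := by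
  rw [hχ.twMul_of_rightAct_eq ρ h2 hz, hw, sub_self, mul_zero, add_zero, ← two_smul K w,
    mul_smul_comm, inv_smul_smul₀ h2]

theorem of_pow [IsUnitalTwist χ] (hχ : IsMetabolic χ) (h2 : (2 : K) ≠ 0)
    (hr : rightAct ρ g3 z = z) (hl : leftAct ρ g3 z = z) (n : ℕ) :
    TwistedTensor.of ρ χ z ^ n = TwistedTensor.of ρ χ (z ^ n) := by
  induction n with
  | zero => rw [pow_zero, pow_zero, TwistedTensor.of_one]
  | succ n ih =>
    rw [pow_succ, ih, TwistedTensor.of_mul_of,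
      hχ.twMul_eq_mul ρ h2 (by rw [map_pow, hr]) hl, pow_succ]

end IsMetabolic

end Metabolic

section Involutions

variable (K : Type*) [Field K] {S : Type*} [CommRing S] [Algebra K S]

/-- For `s ^ 2 = 1`, the idempotent projecting onto the `1`-eigenspace of `s`. -/
def posIdem (s : S) : S := (2 : K)⁻¹ • (1 + s)

/-- For `s ^ 2 = 1`, the idempotent projecting onto the `-1`-eigenspace of `s`. -/
def negIdem (s : S) : S := (2 : K)⁻¹ • (1 - s)

/-- For `s ^ 2 = t ^ 2 = 1`, the involution acting as `-1` exactly on the common `-1`-eigenspace of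
`s` and `t`. -/
def crossSign (s t : S) : S := (2 : K)⁻¹ • (1 + s + t - s * t)

/-- For `a ^ 4 = b ^ 4 = 1`, the element acting as `1`, `a`, `b` and `c * a * b` on the common
eigenspaces of `a ^ 2` and `b ^ 2` for the eigenvalues `(1, 1)`, `(1, -1)`, `(-1, 1)` and
`(-1, -1)`. In the twisted product, `(y ⊗ y)(y ⊗ y)` is this factor times `y² ⊗ y²`. -/
def twistFactor (c : K) (a b : S) : S :=
  posIdem K (a ^ 2) * posIdem K (b ^ 2) + a * posIdem K (a ^ 2) * negIdem K (b ^ 2) +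
    b * negIdem K (a ^ 2) * posIdem K (b ^ 2) +
    c • (a * b * negIdem K (a ^ 2) * negIdem K (b ^ 2))

variable {K}

theorem map_crossSign {T : Type*} [CommRing T] [Algebra K T] (f : S →ₐ[K] T) (s t : S) :
    f (crossSign K s t) = crossSign K (f s) (f t) := by
  simp only [crossSign, map_smul, map_sub, map_add, map_mul, map_one]

theorem half_smul_eq_posIdem_add (ζ : K) (u : S) :
    (2 : K)⁻¹ • (1 + ζ • u + u ^ 2 - ζ • u ^ 3) =
      posIdem K (u ^ 2) + ζ • (u * negIdem K (u ^ 2)) := by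
  simp only [posIdem, negIdem, Algebra.smul_def]
  ring

variable {s t : S}

theorem algebraMap_inv_two_mul_two (h2 : (2 : K) ≠ 0) : algebraMap K S 2⁻¹ * 2 = 1 := by
  rw [← map_ofNat (algebraMap K S) 2, ← map_mul, inv_mul_cancel₀ h2, map_one]

theorem posIdem_mul_self (h2 : (2 : K) ≠ 0) (hs : s ^ 2 = 1) :
    posIdem K s * posIdem K s = posIdem K s := by
  have hhalf := algebraMap_inv_two_mul_two (S := S) h2
  simp only [posIdem, Algebra.smul_def]
  grind

theorem negIdem_mul_self (h2 : (2 : K) ≠ 0) (hs : s ^ 2 = 1) :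
    negIdem K s * negIdem K s = negIdem K s := by
  have hhalf := algebraMap_inv_two_mul_two (S := S) h2
  simp only [negIdem, Algebra.smul_def]
  grind

theorem posIdem_mul_negIdem (hs : s ^ 2 = 1) : posIdem K s * negIdem K s = 0 := by
  simp only [posIdem, negIdem, Algebra.smul_def]
  grind

theorem mul_negIdem (hs : s ^ 2 = 1) : s * negIdem K s = -negIdem K s := by
  simp only [negIdem, Algebra.smul_def]
  grind

theorem posIdem_mul (h2 : (2 : K) ≠ 0) (s t : S) :
    posIdem K (s * t) = posIdem K s * posIdem K t + negIdem K s * negIdem K t := by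
  have hhalf := algebraMap_inv_two_mul_two (S := S) h2
  simp only [posIdem, negIdem, Algebra.smul_def]
  grind

theorem negIdem_mul (h2 : (2 : K) ≠ 0) (s t : S) :
    negIdem K (s * t) = posIdem K s * negIdem K t + negIdem K s * posIdem K t := by
  have hhalf := algebraMap_inv_two_mul_two (S := S) h2
  simp only [posIdem, negIdem, Algebra.smul_def]
  grind

theorem crossSign_sq (h2 : (2 : K) ≠ 0) (hs : s ^ 2 = 1) (ht : t ^ 2 = 1) :
    crossSign K s t ^ 2 = 1 := by
  have hhalf := algebraMap_inv_two_mul_two (S := S) h2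
  simp only [crossSign, Algebra.smul_def]
  grind

theorem crossSign_mul_negIdem (h2 : (2 : K) ≠ 0) (hs : s ^ 2 = 1) (ht : t ^ 2 = 1) :
    crossSign K s t * negIdem K (s * t) = negIdem K (s * t) := by
  have hhalf := algebraMap_inv_two_mul_two (S := S) h2
  simp only [crossSign, negIdem, Algebra.smul_def]
  grind

theorem twistFactor_mul (h2 : (2 : K) ≠ 0) {ζ : K} (hζ : ζ ^ 4 = 1) {a b : S}
    (ha : a ^ 4 = 1) (hb : b ^ 4 = 1) :
    twistFactor K (ζ ^ 2) a b *
      ((posIdem K (a ^ 2) + ζ • (a * negIdem K (a ^ 2))) *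
        (posIdem K (b ^ 2) + ζ • (b * negIdem K (b ^ 2)))) =
    posIdem K (a ^ 2 * b ^ 2) + ζ • (a * b * negIdem K (a ^ 2 * b ^ 2)) := by
  have hs : (a ^ 2) ^ 2 = 1 := by rw [← pow_mul, ha]
  have ht : (b ^ 2) ^ 2 = 1 := by rw [← pow_mul, hb]
  have hz : algebraMap K S ζ ^ 4 = 1 := by rw [← map_pow, hζ, map_one]
  rw [posIdem_mul h2, negIdem_mul h2]
  have hp := posIdem_mul_self h2 hs
  have hp' := posIdem_mul_self h2 ht
  have hq := negIdem_mul_self h2 hs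
  have hq' := negIdem_mul_self h2 ht
  have hpq := posIdem_mul_negIdem (K := K) hs
  have hpq' := posIdem_mul_negIdem (K := K) ht
  have haq := mul_negIdem (K := K) hs
  have hbq' := mul_negIdem (K := K) ht
  simp only [twistFactor, Algebra.smul_def, map_pow]
  generalize posIdem K (a ^ 2) = p, negIdem K (a ^ 2) = q, posIdem K (b ^ 2) = p',
    negIdem K (b ^ 2) = q', algebraMap K S ζ = z at *
  set J := p * p' + a * p * q' + b * q * p' + z ^ 2 * (a * b * q * q')
  have hpJ : p * J = p * (p' + a * q') := by
    linear_combination (p' + a * q') * hp + (b * p' + z ^ 2 * a * b * q') * hpq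
  have hqJ : q * J = b * q * (p' + z ^ 2 * a * q') := by
    linear_combination (p' + a * q') * hpq + (b * p' + z ^ 2 * a * b * q') * hq
  have hmul (r t : S) : (p' + r * q') * (p' + t * q') = p' + r * t * q' := by
    linear_combination hp' + (r + t) * hpq' + r * t * hq'
  calc J * ((p + z * (a * q)) * (p' + z * (b * q')))
      = (p * J + z * a * (q * J)) * (p' + z * (b * q')) := by ring
    _ = p * ((p' + a * q') * (p' + z * b * q')) +
          z * (a * b) * q * ((p' + z ^ 2 * a * q') * (p' + z * b * q')) := by
        rw [hpJ, hqJ]; ring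
    _ = p * p' + z ^ 4 * (a ^ 2 * q) * (b ^ 2 * q') + z * (a * b * (p * q' + q * p')) := by
        rw [hmul, hmul]; ring
    _ = p * p' + q * q' + z * (a * b * (p * q' + q * p')) := by
        rw [haq, hbq', hz]; ring

end Involutions

section Coproduct

variable (K : Type*) [Field K] {B : Type*} [CommRing B] [Algebra K B]

/-- The element `x'` of the paper, the value at `x` of the comultiplication. -/
noncomputable def comulX (x : B) : B ⊗[K] B :=
  x ⊗ₜ[K] x * crossSign K ((x ^ 2) ⊗ₜ[K] 1) (1 ⊗ₜ[K] (x ^ 2))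

theorem comulX_eq (x : B) : comulX K x = (2 : K)⁻¹ •
    (x ⊗ₜ[K] x + x ⊗ₜ[K] (x ^ 3) + (x ^ 3) ⊗ₜ[K] x - (x ^ 3) ⊗ₜ[K] (x ^ 3)) := by
  simp only [comulX, crossSign, mul_smul_comm, mul_sub, mul_add, mul_one,
    Algebra.TensorProduct.tmul_mul_tmul, one_mul, ← pow_succ']
  congr 2
  abel

variable {K}

theorem tmul_one_pow_eq_one {x : B} {n : ℕ} (hx : x ^ n = 1) : (x ⊗ₜ[K] (1 : B)) ^ n = 1 := by
  rw [Algebra.TensorProduct.tmul_pow, hx, one_pow, Algebra.TensorProduct.one_def]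

theorem one_tmul_pow_eq_one {x : B} {n : ℕ} (hx : x ^ n = 1) : ((1 : B) ⊗ₜ[K] x) ^ n = 1 := by
  rw [Algebra.TensorProduct.tmul_pow, hx, one_pow, Algebra.TensorProduct.one_def]

theorem crossSign_tmul_sq (h2 : (2 : K) ≠ 0) {x : B} (hx : x ^ 4 = 1) :
    crossSign K ((x ^ 2) ⊗ₜ[K] (1 : B)) (1 ⊗ₜ[K] (x ^ 2)) ^ 2 = 1 :=
  have hx2 : (x ^ 2) ^ 2 = 1 := by rw [← pow_mul, hx]
  crossSign_sq h2 (tmul_one_pow_eq_one hx2) (one_tmul_pow_eq_one hx2)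

theorem comulX_mul_crossSign (h2 : (2 : K) ≠ 0) {x : B} (hx : x ^ 4 = 1) :
    comulX K x * crossSign K ((x ^ 2) ⊗ₜ[K] 1) (1 ⊗ₜ[K] (x ^ 2)) = x ⊗ₜ[K] x := by
  rw [comulX, mul_assoc, ← sq, crossSign_tmul_sq h2 hx, mul_one]

theorem comulX_sq (h2 : (2 : K) ≠ 0) {x : B} (hx : x ^ 4 = 1) :
    comulX K x ^ 2 = (x ^ 2) ⊗ₜ[K] (x ^ 2) := by
  rw [comulX, mul_pow, crossSign_tmul_sq h2 hx, mul_one, Algebra.TensorProduct.tmul_pow]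

theorem comulX_mul_negIdem (h2 : (2 : K) ≠ 0) {x : B} (hx : x ^ 4 = 1) :
    comulX K x * negIdem K ((x ^ 2) ⊗ₜ[K] (x ^ 2)) =
      x ⊗ₜ[K] x * negIdem K ((x ^ 2) ⊗ₜ[K] (x ^ 2)) := by
  have hx2 : (x ^ 2) ^ 2 = 1 := by rw [← pow_mul, hx]
  have hst : (x ^ 2) ⊗ₜ[K] (x ^ 2) = (x ^ 2) ⊗ₜ[K] 1 * 1 ⊗ₜ[K] (x ^ 2) := by
    rw [Algebra.TensorProduct.tmul_mul_tmul, mul_one, one_mul]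
  rw [comulX, mul_assoc, hst,
    crossSign_mul_negIdem h2 (tmul_one_pow_eq_one hx2) (one_tmul_pow_eq_one hx2)]

end Coproduct

section FirstAction

variable {K : Type*} [Field K] {B : Type*} [CommRing B] [Algebra K B]

/-- The action of `GG` by `φ` and `φ'` on elements `x` and `y` of a `K`-algebra. -/
structure IsFirstAction (ρ : GG →* (B →ₐ[K] B)) (x y : B) : Prop where
  g2_x : ρ g2 x = x ^ 3
  g2_y : ρ g2 y = x ^ 3 * y
  g3_x : ρ g3 x = x
  g3_y : ρ g3 y = x ^ 2 * y

namespace IsFirstAction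

variable {ρ : GG →* (B →ₐ[K] B)} {x y : B}

theorem g2_g3_y (hρ : IsFirstAction ρ x y) (hx : x ^ 4 = 1) : ρ (g2 * g3) y = x * y := by
  rw [map_mul, AlgHom.mul_apply, hρ.g3_y, map_mul, map_pow, hρ.g2_x, hρ.g2_y]
  linear_combination (x ^ 5 * y + x * y) * hx

theorem g2_x_sq (hρ : IsFirstAction ρ x y) (hx : x ^ 4 = 1) : ρ g2 (x ^ 2) = x ^ 2 := by
  rw [map_pow, hρ.g2_x]
  linear_combination x ^ 2 * hx

theorem leftAct_g3_comulX (hρ : IsFirstAction ρ x y) :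
    leftAct ρ g3 (comulX K x) = comulX K x := by
  simp only [comulX, map_mul, map_crossSign, leftAct_tmul, map_pow, map_one, hρ.g3_x]

theorem rightAct_g3_comulX (hρ : IsFirstAction ρ x y) :
    rightAct ρ g3 (comulX K x) = comulX K x := by
  simp only [comulX, map_mul, map_crossSign, rightAct_tmul, map_pow, map_one, hρ.g3_x]

theorem leftAct_g2_comulX (hρ : IsFirstAction ρ x y) (hx : x ^ 4 = 1) :
    leftAct ρ g2 (comulX K x) = (x ^ 2) ⊗ₜ[K] 1 * comulX K x := by
  simp only [comulX, map_mul, map_crossSign, leftAct_tmul, hρ.g2_x_sq hx, map_one, hρ.g2_x,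
    ← mul_assoc, Algebra.TensorProduct.tmul_mul_tmul, one_mul, ← pow_succ]

theorem rightAct_g2_comulX (hρ : IsFirstAction ρ x y) (hx : x ^ 4 = 1) :
    rightAct ρ g2 (comulX K x) = 1 ⊗ₜ[K] (x ^ 2) * comulX K x := by
  simp only [comulX, map_mul, map_crossSign, rightAct_tmul, hρ.g2_x_sq hx, map_one, hρ.g2_x,
    ← mul_assoc, Algebra.TensorProduct.tmul_mul_tmul, one_mul, ← pow_succ]

variable {χ : GG →* GG →* K}

theorem twMul_comulX_tmul (hρ : IsFirstAction ρ x y) (hx : x ^ 4 = 1) (hχ : IsMetabolic χ)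
    (h2 : (2 : K) ≠ 0) :
    twMul ρ (χ · ·) (comulX K x) (y ⊗ₜ[K] y) = (x * y) ⊗ₜ[K] (x * y) := by
  have hY : leftAct ρ g3 (y ⊗ₜ[K] y) = (x ^ 2) ⊗ₜ[K] 1 * y ⊗ₜ[K] y := by
    rw [leftAct_tmul, hρ.g3_y, Algebra.TensorProduct.tmul_mul_tmul, one_mul]
  rw [hχ.twMul_of_rightAct_eq ρ h2 hρ.rightAct_g3_comulX, hρ.rightAct_g2_comulX hx, hY]
  calc (2 : K)⁻¹ • (comulX K x * (y ⊗ₜ[K] y + (x ^ 2) ⊗ₜ[K] 1 * y ⊗ₜ[K] y) +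
        1 ⊗ₜ[K] (x ^ 2) * comulX K x * (y ⊗ₜ[K] y - (x ^ 2) ⊗ₜ[K] 1 * y ⊗ₜ[K] y))
      = comulX K x * crossSign K ((x ^ 2) ⊗ₜ[K] 1) (1 ⊗ₜ[K] (x ^ 2)) * y ⊗ₜ[K] y := by
        simp only [crossSign, Algebra.smul_def]; ring
    _ = (x * y) ⊗ₜ[K] (x * y) := by
        rw [comulX_mul_crossSign h2 hx, Algebra.TensorProduct.tmul_mul_tmul]

theorem twMul_tmul_comulX (hρ : IsFirstAction ρ x y) (hx : x ^ 4 = 1) (hχ : IsMetabolic χ)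
    (h2 : (2 : K) ≠ 0) :
    twMul ρ (χ · ·) (y ⊗ₜ[K] y) (comulX K x) = (x * y) ⊗ₜ[K] (x * y) := by
  have hY : rightAct ρ g3 (y ⊗ₜ[K] y) = 1 ⊗ₜ[K] (x ^ 2) * y ⊗ₜ[K] y := by
    rw [rightAct_tmul, hρ.g3_y, Algebra.TensorProduct.tmul_mul_tmul, one_mul]
  rw [hχ.twMul_of_leftAct_eq ρ h2 _ hρ.leftAct_g3_comulX, hρ.leftAct_g2_comulX hx, hY]
  calc (2 : K)⁻¹ • ((y ⊗ₜ[K] y + 1 ⊗ₜ[K] (x ^ 2) * y ⊗ₜ[K] y) * comulX K x +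
        (y ⊗ₜ[K] y - 1 ⊗ₜ[K] (x ^ 2) * y ⊗ₜ[K] y) * ((x ^ 2) ⊗ₜ[K] 1 * comulX K x))
      = comulX K x * crossSign K ((x ^ 2) ⊗ₜ[K] 1) (1 ⊗ₜ[K] (x ^ 2)) * y ⊗ₜ[K] y := by
        simp only [crossSign, Algebra.smul_def]; ring
    _ = (x * y) ⊗ₜ[K] (x * y) := by
        rw [comulX_mul_crossSign h2 hx, Algebra.TensorProduct.tmul_mul_tmul]

theorem twMul_tmul_self (hρ : IsFirstAction ρ x y) (hx : x ^ 4 = 1) (hχ : IsMetabolic χ) :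
    twMul ρ (χ · ·) (y ⊗ₜ[K] y) (y ⊗ₜ[K] y) =
      twistFactor K (χ g2 g2) (x ⊗ₜ[K] (1 : B)) ((1 : B) ⊗ₜ[K] x) * (y ^ 2) ⊗ₜ[K] (y ^ 2) := by
  have hleft (r : B) : (r * y) ⊗ₜ[K] y = r ⊗ₜ[K] 1 * y ⊗ₜ[K] y := by
    rw [Algebra.TensorProduct.tmul_mul_tmul, one_mul]
  have hright (r : B) : y ⊗ₜ[K] (r * y) = 1 ⊗ₜ[K] r * y ⊗ₜ[K] y := by
    rw [Algebra.TensorProduct.tmul_mul_tmul, one_mul]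
  have hquarter : (4 : K)⁻¹ = 2⁻¹ * 2⁻¹ := by rw [← mul_inv]; norm_num
  have hpowl (n : ℕ) : (x ^ n) ⊗ₜ[K] (1 : B) = (x ⊗ₜ[K] 1) ^ n := by
    rw [Algebra.TensorProduct.tmul_pow, one_pow]
  have hpowr (n : ℕ) : (1 : B) ⊗ₜ[K] (x ^ n) = (1 ⊗ₜ[K] x) ^ n := by
    rw [Algebra.TensorProduct.tmul_pow, one_pow]
  simp only [twMul_eq_sum, sum_GG, leftAct_tmul, rightAct_tmul, map_one, AlgHom.one_apply,
    hρ.g2_y, hρ.g3_y, hρ.g2_g3_y hx, hleft, hright, hpowl, hpowr]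
  simp only [map_mul, MonoidHom.mul_apply, MonoidHom.one_apply, hχ.g2_g3, hχ.g3_g2, hχ.g3_g3,
    ← Algebra.TensorProduct.tmul_pow, hquarter, twistFactor, posIdem, negIdem, Algebra.smul_def,
    map_neg, map_one]
  ring

end IsFirstAction

end FirstAction

namespace IsFirstPair

theorem map_sq_eq {K S T : Type*} [Field K] [CommRing S] [Algebra K S] [CommRing T] [Algebra K T]
    {ζ : K} {x y : S} (h : IsFirstPair ζ x y) (f : S →ₐ[K] T) :
    f (y ^ 2) = posIdem K (f x ^ 2) + ζ • (f x * negIdem K (f x ^ 2)) := by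
  rw [← half_smul_eq_posIdem_add, h.sq]
  simp only [map_smul, map_add, map_sub, map_pow, map_one]

variable {K : Type*} [Field K] {ζ : K} {B : Type*} [CommRing B] [Algebra K B] {x y : B}
  {ρ : GG →* (B →ₐ[K] B)} {χ : GG →* GG →* K}

theorem twMul_tmul_self (hxy : IsFirstPair ζ x y) (hρ : IsFirstAction ρ x y) (hχ : IsMetabolic χ)
    (h2 : (2 : K) ≠ 0) (hζ : ζ ^ 4 = 1) (hχ22 : χ g2 g2 = ζ ^ 2) :
    twMul ρ (χ · ·) (y ⊗ₜ[K] y) (y ⊗ₜ[K] y) = (2 : K)⁻¹ •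
      (1 + ζ • comulX K x + comulX K x ^ 2 - ζ • comulX K x ^ 3) := by
  have hx := hxy.pow_four
  have hyy : (y ^ 2) ⊗ₜ[K] (y ^ 2) =
      (posIdem K ((x ⊗ₜ[K] 1) ^ 2) + ζ • (x ⊗ₜ[K] 1 * negIdem K ((x ⊗ₜ[K] (1 : B)) ^ 2))) *
        (posIdem K ((1 ⊗ₜ[K] x) ^ 2) +
          ζ • (1 ⊗ₜ[K] x * negIdem K (((1 : B) ⊗ₜ[K] x) ^ 2))) := by
    have hl := hxy.map_sq_eq (Algebra.TensorProduct.includeLeft : B →ₐ[K] B ⊗[K] B)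
    have hr := hxy.map_sq_eq (Algebra.TensorProduct.includeRight : B →ₐ[K] B ⊗[K] B)
    simp only [Algebra.TensorProduct.includeLeft_apply,
      Algebra.TensorProduct.includeRight_apply] at hl hr
    rw [← hl, ← hr, Algebra.TensorProduct.tmul_mul_tmul, mul_one, one_mul]
  rw [hρ.twMul_tmul_self hx hχ, hχ22, hyy,
    twistFactor_mul h2 hζ (tmul_one_pow_eq_one hx) (one_tmul_pow_eq_one hx),
    half_smul_eq_posIdem_add, comulX_sq h2 hx, comulX_mul_negIdem h2 hx]
  simp only [Algebra.TensorProduct.tmul_pow, Algebra.TensorProduct.tmul_mul_tmul, one_pow,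
    mul_one, one_mul]

theorem twistedTensor [IsUnitalTwist χ] (hxy : IsFirstPair ζ x y) (hρ : IsFirstAction ρ x y)
    (hχ : IsMetabolic χ) (h2 : (2 : K) ≠ 0) (hζ : ζ ^ 4 = 1) (hχ22 : χ g2 g2 = ζ ^ 2) :
    IsFirstPair ζ (TwistedTensor.of ρ χ (comulX K x)) (TwistedTensor.of ρ χ (y ⊗ₜ[K] y)) where
  commute := by
    rw [commute_iff_eq, TwistedTensor.of_mul_of, TwistedTensor.of_mul_of,
      hρ.twMul_comulX_tmul hxy.pow_four hχ h2, hρ.twMul_tmul_comulX hxy.pow_four hχ h2]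
  pow_four := by
    rw [hχ.of_pow ρ h2 hρ.rightAct_g3_comulX hρ.leftAct_g3_comulX, pow_mul (comulX K x) 2 2,
      comulX_sq h2 hxy.pow_four, Algebra.TensorProduct.tmul_pow, ← pow_mul, hxy.pow_four,
      ← Algebra.TensorProduct.one_def, TwistedTensor.of_one]
  sq := by
    rw [hχ.of_pow ρ h2 hρ.rightAct_g3_comulX hρ.leftAct_g3_comulX,
      hχ.of_pow ρ h2 hρ.rightAct_g3_comulX hρ.leftAct_g3_comulX, pow_two, TwistedTensor.of_mul_of,
      hxy.twMul_tmul_self hρ hχ h2 hζ hχ22]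
    simp only [map_smul, map_add, map_sub, TwistedTensor.of_one]

theorem twMul_relations [IsUnitalTwist χ] {u v : B ⊗[K] B}
    (h : IsFirstPair ζ (TwistedTensor.of ρ χ u) (TwistedTensor.of ρ χ v)) :
    twMul ρ (χ · ·) (twMul ρ (χ · ·) (twMul ρ (χ · ·) u u) u) u = 1 ∧
    twMul ρ (χ · ·) v v = (2 : K)⁻¹ • (1 + ζ • u + twMul ρ (χ · ·) u u -
      ζ • twMul ρ (χ · ·) (twMul ρ (χ · ·) u u) u) ∧
    twMul ρ (χ · ·) u v = twMul ρ (χ · ·) v u := by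
  have hsq (z) : TwistedTensor.of ρ χ z ^ 2 = TwistedTensor.of ρ χ (twMul ρ (χ · ·) z z) := by
    rw [pow_two, TwistedTensor.of_mul_of]
  have hcube : TwistedTensor.of ρ χ u ^ 3 =
      TwistedTensor.of ρ χ (twMul ρ (χ · ·) (twMul ρ (χ · ·) u u) u) := by
    rw [pow_succ, hsq, TwistedTensor.of_mul_of]
  refine ⟨(TwistedTensor.of ρ χ).injective ?_, (TwistedTensor.of ρ χ).injective ?_,
    (TwistedTensor.of ρ χ).injective ?_⟩
  · rw [← TwistedTensor.of_mul_of, ← hcube, ← pow_succ, h.pow_four, TwistedTensor.of_one]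
  · rw [← hsq, h.sq, hsq, hcube]
    simp only [map_smul, map_add, map_sub, TwistedTensor.of_one]
  · rw [← TwistedTensor.of_mul_of, ← TwistedTensor.of_mul_of, h.commute.eq]

theorem existsUnique_linearMap [IsUnitalTwist χ] {u v : B ⊗[K] B}
    (h : IsFirstPair ζ (TwistedTensor.of ρ χ u) (TwistedTensor.of ρ χ v)) :
    ∃! Δ : FirstAlg K ζ →ₗ[K] B ⊗[K] B,
      Δ 1 = 1 ∧ (∀ a b : FirstAlg K ζ, Δ (a * b) = twMul ρ (χ · ·) (Δ a) (Δ b)) ∧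
      Δ (xF K ζ) = u ∧ Δ (yF K ζ) = v := by
  obtain ⟨f, ⟨hfx, hfy⟩, huniq⟩ := h.existsUnique_algHom
  refine ⟨(TwistedTensor.of ρ χ).symm ∘ₗ f.toLinearMap, ⟨?_, fun a b => ?_, ?_, ?_⟩, ?_⟩
  · exact (LinearEquiv.symm_apply_eq _).mpr (map_one f)
  · exact (LinearEquiv.symm_apply_eq _).mpr <| by
      simp [← TwistedTensor.of_mul_of]
  · exact (LinearEquiv.symm_apply_eq _).mpr hfx
  · exact (LinearEquiv.symm_apply_eq _).mpr hfy
  · rintro Δ ⟨hone, hmul, hx, hy⟩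
    let g : FirstAlg K ζ →ₐ[K] TwistedTensor ρ χ :=
      AlgHom.ofLinearMap (TwistedTensor.of ρ χ ∘ₗ Δ) (congrArg (TwistedTensor.of ρ χ) hone)
        fun a b => (congrArg (TwistedTensor.of ρ χ) (hmul a b)).trans
          (TwistedTensor.of_mul_of ρ χ _ _).symm
    have hg : g = f :=
      huniq g ⟨congrArg (TwistedTensor.of ρ χ) hx, congrArg (TwistedTensor.of ρ χ) hy⟩
    rw [← hg]
    exact LinearMap.ext fun a => ((TwistedTensor.of ρ χ).symm_apply_apply (Δ a)).symm

end IsFirstPair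

theorem stmt_7_general {K : Type*} [Field K] (h2 : (2 : K) ≠ 0) {ζ : K} (hζ : ζ ^ 4 = 1)
    {B : Type*} [CommRing B] [Algebra K B] {x y : B} (hxy : IsFirstPair ζ x y)
    {ρ : GG →* (B →ₐ[K] B)} (hρ : IsFirstAction ρ x y) {θ : GG → GG → K}
    (hθr : ∀ g h h' : GG, θ g (h * h') = θ g h * θ g h')
    (hθl : ∀ g g' h : GG, θ (g * g') h = θ g h * θ g' h)
    (hθ22 : θ g2 g2 = ζ ^ 2) (hθ23 : θ g2 g3 = -1)
    (hθ32 : θ g3 g2 = -1) (hθ33 : θ g3 g3 = 1)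
    {x' y' : B ⊗[K] B}
    (hx' : x' = (2 : K)⁻¹ •
      (x ⊗ₜ[K] x + x ⊗ₜ[K] (x ^ 3) + (x ^ 3) ⊗ₜ[K] x - (x ^ 3) ⊗ₜ[K] (x ^ 3)))
    (hy' : y' = y ⊗ₜ[K] y) :
    twMul ρ θ (twMul ρ θ (twMul ρ θ x' x') x') x' = 1 ∧
    twMul ρ θ y' y' = (2 : K)⁻¹ •
      (1 + ζ • x' + twMul ρ θ x' x' - ζ • twMul ρ θ (twMul ρ θ x' x') x') ∧
    twMul ρ θ x' y' = twMul ρ θ y' x' ∧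
    ∃! Δ : FirstAlg K ζ →ₗ[K] B ⊗[K] B,
      Δ 1 = 1 ∧ (∀ a b : FirstAlg K ζ, Δ (a * b) = twMul ρ θ (Δ a) (Δ b)) ∧
      Δ (xF K ζ) = x' ∧ Δ (yF K ζ) = y' := by
  obtain ⟨χ, rfl⟩ := exists_bicharacter_eq hθr hθl (a := g3) (b := g3) (by simp [hθ33])
  have hχ : IsMetabolic χ := ⟨hθ23, hθ32, hθ33⟩
  have := hχ.isUnitalTwist h2
  obtain rfl : x' = comulX K x := hx'.trans (comulX_eq K x).symm
  subst hy'
  have hpair := hxy.twistedTensor hρ hχ h2 hζ hθ22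
  obtain ⟨hx4, hysq, hcomm⟩ := hpair.twMul_relations
  exact ⟨hx4, hysq, hcomm, hpair.existsUnique_linearMap⟩

theorem stmt_7 {K : Type*} [Field K] (ξ : K) (hξ : IsPrimitiveRoot ξ 8)
    (ζ : K) (hζ : ζ ^ 4 = 1)
    (ρ : GG →* (FirstAlg K ζ →ₐ[K] FirstAlg K ζ))
    (hρ2x : ρ g2 (xF K ζ) = xF K ζ ^ 3) (hρ2y : ρ g2 (yF K ζ) = xF K ζ ^ 3 * yF K ζ)
    (hρ3x : ρ g3 (xF K ζ) = xF K ζ) (hρ3y : ρ g3 (yF K ζ) = xF K ζ ^ 2 * yF K ζ)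
    (θ : GG → GG → K)
    (hθr : ∀ g h h' : GG, θ g (h * h') = θ g h * θ g h')
    (hθl : ∀ g g' h : GG, θ (g * g') h = θ g h * θ g' h)
    (hθ22 : θ g2 g2 = ζ ^ 2) (hθ23 : θ g2 g3 = -1)
    (hθ32 : θ g3 g2 = -1) (hθ33 : θ g3 g3 = 1)
    (x' y' : FirstAlg K ζ ⊗[K] FirstAlg K ζ)
    (hx' : x' = (2 : K)⁻¹ •
      ((xF K ζ) ⊗ₜ[K] (xF K ζ) + (xF K ζ) ⊗ₜ[K] (xF K ζ ^ 3) +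
        (xF K ζ ^ 3) ⊗ₜ[K] (xF K ζ) - (xF K ζ ^ 3) ⊗ₜ[K] (xF K ζ ^ 3)))
    (hy' : y' = (yF K ζ) ⊗ₜ[K] (yF K ζ)) :
    -- `x'⁴ = 1 ⊗ 1`
    twMul ρ θ (twMul ρ θ (twMul ρ θ x' x') x') x' =
        (1 : FirstAlg K ζ) ⊗ₜ[K] (1 : FirstAlg K ζ) ∧
    -- `y'² = (1/2)((1 ⊗ 1) + ζx' + x'² - ζx'³)`
    twMul ρ θ y' y' = (2 : K)⁻¹ •
      ((1 : FirstAlg K ζ) ⊗ₜ[K] (1 : FirstAlg K ζ) + ζ • x' + twMul ρ θ x' x'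
        - ζ • twMul ρ θ (twMul ρ θ x' x') x') ∧
    -- `x'y' = y'x'`
    twMul ρ θ x' y' = twMul ρ θ y' x' ∧
    -- there is a unique algebra homomorphism `Δ : A → A ⊗̂ A` with `Δ(x) = x'`, `Δ(y) = y'`
    (∃! Δ : FirstAlg K ζ →ₗ[K] FirstAlg K ζ ⊗[K] FirstAlg K ζ,
      Δ 1 = (1 : FirstAlg K ζ) ⊗ₜ[K] (1 : FirstAlg K ζ) ∧
      (∀ a b : FirstAlg K ζ, Δ (a * b) = twMul ρ θ (Δ a) (Δ b)) ∧
      Δ (xF K ζ) = x' ∧ Δ (yF K ζ) = y') := by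
  have : NeZero ((8 : ℕ) : K) := hξ.neZero'
  have h2 : (2 : K) ≠ 0 := fun h => NeZero.ne ((8 : ℕ) : K) (by push_cast; linear_combination 4 * h)
  exact stmt_7_general h2 hζ isFirstPair_xF_yF ⟨hρ2x, hρ2y, hρ3x, hρ3y⟩ hθr hθl hθ22 hθ23 hθ32 hθ33
    hx' hy'
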